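/- arXiv:0711.4849 — 2 statements merged into one kernel-verified Lean document; each statement's English description precedes it below -/
import Mathlib

section
/- Let J₁ and J₂ be Poisson vectors on an open set U ⊆ ℝ³ (i.e., J₁·(curl J₁) = 0 and J₂·(curl J₂) = 0 on U), and let c be a smooth scalar function on U satisfying (J₁ × J₂)·∇c = (J₁·(curl J₂) + J₂·(curl J₁)) c at every point of U. Then the vector field J₁ + cJ₂ satisfies the Jacobi identity: (J₁ + cJ₂)·(curl (J₁ + cJ₂)) = 0 on U. -/
/-!
The helicity density `w · curl w` is a quadratic form in `w`, with polarization
`(v, w) ↦ v · curl w + w · curl v`. By the Leibniz rule `curl (c w) = c curl w + ∇c × w`, and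
`∇c × w` is orthogonal to `w`, so multiplying `w` by a function `c` multiplies its helicity density
by `c²`. Thus `∇c` enters the helicity density of `J₁ + c J₂` only through the polarization, where
it contributes `J₁ · (∇c × J₂) = -(J₁ × J₂) · ∇c`; the equation for `c` says exactly that the
polarization of `J₁` and `c J₂` vanishes.
-/

noncomputable section

/-- Three-dimensional Euclidean space. -/
abbrev E3 : Type := EuclideanSpace ℝ (Fin 3)

/-- The Euclidean dot product on ℝ³. -/
def dot (u v : E3) : ℝ := ∑ i, u i * v i

/-- The cross product on ℝ³. -/
def cross (u v : E3) : E3 :=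
  (WithLp.equiv 2 (Fin 3 → ℝ)).symm
    ![u 1 * v 2 - u 2 * v 1, u 2 * v 0 - u 0 * v 2, u 0 * v 1 - u 1 * v 0]

/-- Partial derivative of a scalar function in the `i`-th coordinate direction. -/
def pd (i : Fin 3) (f : E3 → ℝ) (x : E3) : ℝ :=
  fderiv ℝ f x (EuclideanSpace.single i 1)

/-- The gradient ∇f of a scalar function. -/
def grad (f : E3 → ℝ) (x : E3) : E3 :=
  (WithLp.equiv 2 (Fin 3 → ℝ)).symm ![pd 0 f x, pd 1 f x, pd 2 f x]

/-- The curl ∇×F of a vector field. -/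
def curl (F : E3 → E3) (x : E3) : E3 :=
  (WithLp.equiv 2 (Fin 3 → ℝ)).symm
    ![pd 1 (fun y => F y 2) x - pd 2 (fun y => F y 1) x,
      pd 2 (fun y => F y 0) x - pd 0 (fun y => F y 2) x,
      pd 0 (fun y => F y 1) x - pd 1 (fun y => F y 0) x]

/-- Directional derivative ∂ₛ f = t·∇f of a scalar function along a vector field t. -/
def ds (t : E3 → E3) (f : E3 → ℝ) (x : E3) : ℝ := dot (t x) (grad f x)

/-- Componentwise directional derivative (u·∇)w of a vector field w along u. -/
def dirDeriv (u w : E3 → E3) (x : E3) : E3 :=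
  (WithLp.equiv 2 (Fin 3 → ℝ)).symm
    ![fderiv ℝ (fun y => w y 0) x (u x),
      fderiv ℝ (fun y => w y 1) x (u x),
      fderiv ℝ (fun y => w y 2) x (u x)]

/-- Helicity density w·(curl w) of a vector field. -/
def hel (w : E3 → E3) (x : E3) : ℝ := dot (w x) (curl w x)

/-- Cross-helicity sum n·(curl b) + b·(curl n). -/
def crossHel (n b : E3 → E3) (x : E3) : ℝ :=
  dot (n x) (curl b x) + dot (b x) (curl n x)

/-- A smooth right-handed orthonormal (Serret–Frenet type) frame on U. -/
def IsFrameOn (t n b : E3 → E3) (U : Set E3) : Prop :=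
  ContDiffOn ℝ (⊤ : ℕ∞) t U ∧ ContDiffOn ℝ (⊤ : ℕ∞) n U ∧ ContDiffOn ℝ (⊤ : ℕ∞) b U ∧
  ∀ x ∈ U, ‖t x‖ = 1 ∧ ‖n x‖ = 1 ∧ ‖b x‖ = 1 ∧
    dot (t x) (n x) = 0 ∧ dot (t x) (b x) = 0 ∧ dot (n x) (b x) = 0 ∧
    b x = cross (t x) (n x)

section VectorAlgebra

open scoped Matrix

variable (u v w : E3)

theorem dot_eq_dotProduct : dot u v = u.ofLp ⬝ᵥ v.ofLp := rfl

theorem dot_add_left : dot (u + v) w = dot u w + dot v w :=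
  add_dotProduct u.ofLp v.ofLp w.ofLp

theorem dot_add_right : dot u (v + w) = dot u v + dot u w :=
  dotProduct_add u.ofLp v.ofLp w.ofLp

theorem dot_smul_left (a : ℝ) : dot (a • u) v = a * dot u v :=
  smul_dotProduct a u.ofLp v.ofLp

theorem dot_smul_right (a : ℝ) : dot u (a • v) = a * dot u v :=
  dotProduct_smul a u.ofLp v.ofLp

theorem ofLp_cross : (cross u v).ofLp = u.ofLp ⨯₃ v.ofLp :=
  (cross_apply u.ofLp v.ofLp).symm

theorem dot_cross_right_self : dot v (cross u v) = 0 := by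
  rw [dot_eq_dotProduct, ofLp_cross, dot_cross_self]

theorem dot_cross_eq_neg_cross_dot : dot u (cross v w) = -dot (cross u w) v := by
  simp only [dot_eq_dotProduct, ofLp_cross]
  rw [triple_product_permutation, ← cross_anticomm, dotProduct_neg, dotProduct_comm]

end VectorAlgebra

section Calculus

variable {f g c : E3 → ℝ} {F G : E3 → E3} {x : E3}

theorem pd_add (hf : DifferentiableAt ℝ f x) (hg : DifferentiableAt ℝ g x) (i : Fin 3) :
    pd i (fun y => f y + g y) x = pd i f x + pd i g x := by
  simp only [pd, fderiv_fun_add hf hg, add_apply]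

theorem pd_mul (hf : DifferentiableAt ℝ f x) (hg : DifferentiableAt ℝ g x) (i : Fin 3) :
    pd i (fun y => f y * g y) x = f x * pd i g x + g x * pd i f x := by
  simp only [pd, fderiv_fun_mul hf hg, add_apply, smul_apply, smul_eq_mul]

theorem curl_add (hF : DifferentiableAt ℝ F x) (hG : DifferentiableAt ℝ G x) :
    curl (fun y => F y + G y) x = curl F x + curl G x := by
  rw [differentiableAt_euclidean] at hF hG
  ext i
  fin_cases i <;>
    simp only [curl, WithLp.equiv_symm_apply, PiLp.add_apply, pd_add (hF _) (hG _),
      Fin.zero_eta, Fin.mk_one, Fin.reduceFinMk, Matrix.cons_val] <;>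
    ring

theorem curl_smul (hc : DifferentiableAt ℝ c x) (hF : DifferentiableAt ℝ F x) :
    curl (fun y => c y • F y) x = c x • curl F x + cross (grad c x) (F x) := by
  rw [differentiableAt_euclidean] at hF
  ext i
  fin_cases i <;>
    simp only [curl, cross, grad, WithLp.equiv_symm_apply, PiLp.add_apply, PiLp.smul_apply,
      smul_eq_mul, pd_mul hc (hF _), Fin.zero_eta, Fin.mk_one, Fin.reduceFinMk, Matrix.cons_val] <;>
    ring

theorem hel_add (hF : DifferentiableAt ℝ F x) (hG : DifferentiableAt ℝ G x) :
    hel (fun y => F y + G y) x = hel F x + hel G x + crossHel F G x := by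
  simp only [hel, crossHel, curl_add hF hG, dot_add_left, dot_add_right]
  ring

theorem hel_smul (hc : DifferentiableAt ℝ c x) (hF : DifferentiableAt ℝ F x) :
    hel (fun y => c y • F y) x = c x ^ 2 * hel F x := by
  simp only [hel, curl_smul hc hF, dot_add_right, dot_smul_left, dot_smul_right,
    dot_cross_right_self]
  ring

theorem crossHel_smul_right (hc : DifferentiableAt ℝ c x) (hG : DifferentiableAt ℝ G x) :
    crossHel F (fun y => c y • G y) x
      = crossHel F G x * c x - dot (cross (F x) (G x)) (grad c x) := by
  simp only [crossHel, curl_smul hc hG, dot_add_right, dot_smul_left, dot_smul_right,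
    dot_cross_eq_neg_cross_dot]
  ring

end Calculus

theorem jacobi_of_function_coefficient_general {J₁ J₂ : E3 → E3} {c : E3 → ℝ} {x : E3}
    (h1 : DifferentiableAt ℝ J₁ x) (h2 : DifferentiableAt ℝ J₂ x) (hc : DifferentiableAt ℝ c x)
    (hP1 : hel J₁ x = 0) (hP2 : hel J₂ x = 0)
    (hpde : dot (cross (J₁ x) (J₂ x)) (grad c x) = crossHel J₁ J₂ x * c x) :
    hel (fun y => J₁ y + c y • J₂ y) x = 0 := by
  have hel_cJ₂ : hel (fun y => c y • J₂ y) x = 0 := by rw [hel_smul hc h2, hP2, mul_zero]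
  have crossHel_J₁_cJ₂ : crossHel J₁ (fun y => c y • J₂ y) x = 0 := by
    rw [crossHel_smul_right hc h2, hpde, sub_self]
  rw [hel_add h1 (hc.fun_smul h2), hP1, hel_cJ₂, crossHel_J₁_cJ₂, add_zero, add_zero]

/-- if c solves (J₁×J₂)·∇c = (J₁·curl J₂ + J₂·curl J₁) c then
J₁ + cJ₂ satisfies the Jacobi identity. -/
theorem jacobi_of_function_coefficient
    (U : Set E3) (hU : IsOpen U) (J₁ J₂ : E3 → E3) (c : E3 → ℝ)
    (h1 : ContDiffOn ℝ (⊤ : ℕ∞) J₁ U) (h2 : ContDiffOn ℝ (⊤ : ℕ∞) J₂ U)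
    (hc : ContDiffOn ℝ (⊤ : ℕ∞) c U)
    (hP1 : ∀ x ∈ U, dot (J₁ x) (curl J₁ x) = 0)
    (hP2 : ∀ x ∈ U, dot (J₂ x) (curl J₂ x) = 0)
    (hpde : ∀ x ∈ U, dot (cross (J₁ x) (J₂ x)) (grad c x)
        = (dot (J₁ x) (curl J₂ x) + dot (J₂ x) (curl J₁ x)) * c x) :
    ∀ x ∈ U, dot (J₁ x + c x • J₂ x) (curl (fun y => J₁ y + c y • J₂ y) x) = 0 := by
  intro x hx
  have hxU := hU.mem_nhds hx
  exact jacobi_of_function_coefficient_general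
    ((h1.contDiffAt hxU).differentiableAt (by simp))
    ((h2.contDiffAt hxU).differentiableAt (by simp))
    ((hc.contDiffAt hxU).differentiableAt (by simp)) (hP1 x hx) (hP2 x hx) (hpde x hx)
end
end

section
/- Let (t, n, b) be a smooth right-handed orthonormal frame on an open set U ⊆ ℝ³, let α be smooth and nowhere zero, μ smooth, J = α(n + μb), let H be a smooth scalar function and v a smooth nowhere-zero vector field on U with v = J × ∇H and t = v/‖v‖. Then at every point of U: b = ‖v‖⁻¹ (α∇H − (n·∇H) J) and n = −‖v‖⁻¹ (αμ∇H − (b·∇H) J). -/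
/-!
In a right-handed orthonormal frame `b = t × n` and `n = -(t × b)`. Substituting
`t = ‖v‖⁻¹ (J × ∇H)`, the double cross products expand by
`(J × ∇H) × w = (J·w) ∇H - (∇H·w) J`, and `J·n = α`, `J·b = αμ` for `J = α(n + μb)`.
-/

noncomputable section

open scoped Matrix

section VectorAlgebra

variable (u v w : E3)

theorem dot_comm : dot u v = dot v u :=
  dotProduct_comm _ _

theorem dot_self_eq_norm_sq : dot u u = ‖u‖ ^ 2 := by
  simp only [EuclideanSpace.real_norm_sq_eq, dot, ← sq]

theorem dot_smul_add_smul (a m : ℝ) :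
    dot (a • (u + m • v)) w = a * (dot u w + m * dot v w) := by
  simp only [dot_eq_dotProduct, WithLp.ofLp_smul, WithLp.ofLp_add, smul_dotProduct,
    add_dotProduct, smul_eq_mul]

theorem smul_cross (c : ℝ) : cross (c • u) v = c • cross u v :=
  WithLp.ofLp_injective 2 <| by
    simp only [ofLp_cross, WithLp.ofLp_smul, map_smul, LinearMap.smul_apply]

theorem cross_cross_eq_dot_smul_sub : cross (cross u v) w = dot u w • v - dot v w • u :=
  WithLp.ofLp_injective 2 (cross_cross_eq_smul_sub_smul _ _ _)

theorem cross_cross_eq_dot_smul_sub' : cross u (cross v w) = dot u w • v - dot v u • w :=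
  WithLp.ofLp_injective 2 (cross_cross_eq_smul_sub_smul' _ _ _)

end VectorAlgebra

/-- A right-handed orthonormal frame `(t, n, b)` of ℝ³, encoded as an orthonormal pair `t`, `n`
completed by `b = t × n`; this is the pointwise content of `IsFrameOn`. -/
structure IsRightHandedFrame (t n b : E3) : Prop where
  norm_tangent : ‖t‖ = 1
  norm_normal : ‖n‖ = 1
  dot_tangent_normal : dot t n = 0
  binormal_eq_cross : b = cross t n

theorem IsFrameOn.isRightHandedFrame {t n b : E3 → E3} {U : Set E3} (h : IsFrameOn t n b U)
    {x : E3} (hx : x ∈ U) : IsRightHandedFrame (t x) (n x) (b x) := by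
  obtain ⟨-, -, -, hframe⟩ := h
  obtain ⟨ht, hn, -, htn, -, -, hb⟩ := hframe x hx
  exact ⟨ht, hn, htn, hb⟩

namespace IsRightHandedFrame

variable {t n b : E3}

theorem dot_tangent_self (h : IsRightHandedFrame t n b) : dot t t = 1 := by
  rw [dot_self_eq_norm_sq, h.norm_tangent, one_pow]

theorem dot_normal_self (h : IsRightHandedFrame t n b) : dot n n = 1 := by
  rw [dot_self_eq_norm_sq, h.norm_normal, one_pow]

theorem dot_normal_binormal (h : IsRightHandedFrame t n b) : dot n b = 0 := by
  rw [h.binormal_eq_cross]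
  exact dot_cross_self _ _

theorem dot_binormal_self (h : IsRightHandedFrame t n b) : dot b b = 1 := by
  have lagrange : dot (cross t n) (cross t n) = dot t t * dot n n - dot t n * dot n t :=
    cross_dot_cross _ _ _ _
  rw [h.binormal_eq_cross, lagrange, h.dot_tangent_self, h.dot_normal_self,
    h.dot_tangent_normal, zero_mul, mul_one, sub_zero]

theorem normal_eq_neg_cross (h : IsRightHandedFrame t n b) : n = -cross t b := by
  rw [h.binormal_eq_cross, cross_cross_eq_dot_smul_sub', h.dot_tangent_normal,
    h.dot_tangent_self, zero_smul, one_smul, zero_sub, neg_neg]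

variable {J g : E3} {r : ℝ}

theorem binormal_eq_of_tangent_eq_smul_cross (h : IsRightHandedFrame t n b)
    (ht : t = r • cross J g) : b = r • (dot J n • g - dot n g • J) := by
  rw [h.binormal_eq_cross, ht, smul_cross, cross_cross_eq_dot_smul_sub, dot_comm g n]

theorem normal_eq_of_tangent_eq_smul_cross (h : IsRightHandedFrame t n b)
    (ht : t = r • cross J g) : n = -(r • (dot J b • g - dot b g • J)) := by
  rw [dot_comm b g, ← cross_cross_eq_dot_smul_sub, ← smul_cross, ← ht]
  exact h.normal_eq_neg_cross

theorem dot_smul_add_smul_normal (h : IsRightHandedFrame t n b) (a m : ℝ) :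
    dot (a • (n + m • b)) n = a := by
  rw [dot_smul_add_smul, h.dot_normal_self, dot_comm b n, h.dot_normal_binormal, mul_zero,
    add_zero, mul_one]

theorem dot_smul_add_smul_binormal (h : IsRightHandedFrame t n b) (a m : ℝ) :
    dot (a • (n + m • b)) b = a * m := by
  rw [dot_smul_add_smul, h.dot_normal_binormal, h.dot_binormal_self, zero_add, mul_one]

end IsRightHandedFrame

theorem frame_vectors_from_hamiltonian_general {t n b g : E3} {a m r : ℝ}
    (hframe : IsRightHandedFrame t n b) (ht : t = r • cross (a • (n + m • b)) g) :
    b = r • (a • g - dot n g • (a • (n + m • b))) ∧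
      n = -(r • ((a * m) • g - dot b g • (a • (n + m • b)))) := by
  have hb := hframe.binormal_eq_of_tangent_eq_smul_cross ht
  have hn := hframe.normal_eq_of_tangent_eq_smul_cross ht
  rw [hframe.dot_smul_add_smul_normal] at hb
  rw [hframe.dot_smul_add_smul_binormal] at hn
  exact ⟨hb, hn⟩

/-- from v = J × ∇H with J = α(n + μb) and t = v/‖v‖ one obtains
b = ‖v‖⁻¹(α∇H − (n·∇H)J) and n = −‖v‖⁻¹(αμ∇H − (b·∇H)J). -/
theorem frame_vectors_from_hamiltonian
    (U : Set E3) (hU : IsOpen U) (t n b : E3 → E3)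
    (hframe : IsFrameOn t n b U)
    (α μ : E3 → ℝ)
    (hα : ContDiffOn ℝ (⊤ : ℕ∞) α U) (hμ : ContDiffOn ℝ (⊤ : ℕ∞) μ U)
    (hα0 : ∀ x ∈ U, α x ≠ 0)
    (H : E3 → ℝ) (hH : ContDiffOn ℝ (⊤ : ℕ∞) H U)
    (v : E3 → E3) (hv : ContDiffOn ℝ (⊤ : ℕ∞) v U) (hv0 : ∀ x ∈ U, v x ≠ 0)
    (hham : ∀ x ∈ U, v x = cross (α x • (n x + μ x • b x)) (grad H x))
    (ht : ∀ x ∈ U, t x = ‖v x‖⁻¹ • v x) :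
    ∀ x ∈ U,
      b x = ‖v x‖⁻¹ •
          (α x • grad H x - dot (n x) (grad H x) • (α x • (n x + μ x • b x))) ∧
      n x = -(‖v x‖⁻¹ •
          ((α x * μ x) • grad H x - dot (b x) (grad H x) • (α x • (n x + μ x • b x)))) := by
  intro x hx
  have htangent : t x = ‖v x‖⁻¹ • cross (α x • (n x + μ x • b x)) (grad H x) :=
    (ht x hx).trans (congrArg _ (hham x hx))
  exact frame_vectors_from_hamiltonian_general (hframe.isRightHandedFrame hx) htangent
end
end
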